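/- Let X be a T1 topological space with a countable basis B : ℕ → Set X. Then X is quasi-Polish if and only if overt choice for X (with respect to B) is continuous. -/

import Mathlib

/-!
A point `x` is identified with its code `{n | x ∈ B n}`, an element of `ℕ → Prop`.

*Quasi-Polish implies overt choice.* Let `X` be homeomorphic to the `Π⁰₂` set `⋂ i, (U i → V i)`.
Given a name of `A`, build an increasing sequence of finite sets, each of which is contained in the
image of some point of `A`, and treat the requirement `U i → V i` at infinitely many stages: if the
current finite set already forces membership in `U i`, enlarge it so as to force membership
in `V i`. The union lies in the `Π⁰₂` set, and the corresponding point lies in `A` because each of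
its neighbourhoods meets `A`. Every step is a search among countably many conditions that are open
in the name, so it can be made locally constant (`exists_locallyConstant_selection`).

*Overt choice implies quasi-Polish.* Let `F` be a continuous choice function and `q` a dense
sequence. For `y` the code of a point `x`, a finite sequence `τ` and a finite set `P` of indices, if
`τ` starts a name of the finite set `{x} ∪ {q i | i ∈ P}` (which is closed, as `X` is `T1`) and `τ`
already prevents `F` from choosing any `q i` with `i ∈ P`, then on names prolonging `τ` the
function `F` must list exactly `y`. Written in terms of finite sequences this becomes a `Π⁰₂`
condition on `y`; together with two simpler `Π⁰₂` conditions, namely that finitely many basic sets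
listed in `y` always meet and that `y` is never a proper subset of the code of some `q i`, it
defines the set `Admissible`, which contains all codes.

Conversely let `y` be admissible and not the code of any `q i`; then no `q i` lies in all the `B n`
with `n ∈ y`. Build longer and longer sequences `τ`. At each stage pick a `q i` that lies in the
finitely many basic sets promised by `τ` on behalf of `y`, prolong `τ` until `F` has listed an
element of `y` outside the code of `q i`, and from then on list the code of `q i` as well. In the
limit this gives a name of the closure `A` of the chosen points `q i`, on which `F` lists
exactly `y`. As `F` names a point of `A`, the set `y` is the code of a point of `X`.
-/

/-- `p` enumerates `S` if `S = {n | ∃ k, p k = n + 1}`. -/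
def Enumerates (p : ℕ → ℕ) (S : Set ℕ) : Prop := S = {n | ∃ k, p k = n + 1}

/-- `B : ℕ → Set X` is a countable basis: each `B n` is open and every open set is a
union of sets `B n`. -/
def IsCountableBasis {X : Type*} [TopologicalSpace X] (B : ℕ → Set X) : Prop :=
  (∀ n, IsOpen (B n)) ∧ ∀ U : Set X, IsOpen U → ∃ S : Set ℕ, U = ⋃ n ∈ S, B n

/-- A name of a point `x` is an enumeration of `{n | x ∈ B n}`. -/
def PointName {X : Type*} (B : ℕ → Set X) (x : X) (p : ℕ → ℕ) : Prop :=
  Enumerates p {n | x ∈ B n}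

/-- A name of a closed set `A` is an enumeration of `{n | B n ∩ A ≠ ∅}`. -/
def ClosedName {X : Type*} (B : ℕ → Set X) (A : Set X) (p : ℕ → ℕ) : Prop :=
  Enumerates p {n | (B n ∩ A).Nonempty}

/-- Overt choice for `X` (w.r.t. the basis `B`) is continuous: there is a function `F`,
continuous on the set of names of nonempty closed subsets of `X`, mapping any name of a
nonempty closed set `A` to a name of some point of `A`. -/
def OvertChoiceContinuous {X : Type*} [TopologicalSpace X] (B : ℕ → Set X) : Prop :=
  ∃ F : (ℕ → ℕ) → (ℕ → ℕ),
    ContinuousOn F {p | ∃ A : Set X, A.Nonempty ∧ IsClosed A ∧ ClosedName B A p} ∧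
    ∀ (p : ℕ → ℕ) (A : Set X), A.Nonempty → IsClosed A → ClosedName B A p →
      ∃ x ∈ A, PointName B x (F p)

/-- A subset of a topological space is Π⁰₂ if it is of the form
`⋂ i, {x | x ∈ U i → x ∈ V i}` with all `U i`, `V i` open. -/
def IsPi02 {Y : Type*} [TopologicalSpace Y] (S : Set Y) : Prop :=
  ∃ U V : ℕ → Set Y, (∀ i, IsOpen (U i)) ∧ (∀ i, IsOpen (V i)) ∧
    S = ⋂ i, {x | x ∈ U i → x ∈ V i}

/-- A space is quasi-Polish if it is homeomorphic to a Π⁰₂ subspace of `ℕ → Prop`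
(with the product of Sierpiński topologies). -/
def QuasiPolish (X : Type*) [TopologicalSpace X] : Prop :=
  ∃ S : Set (ℕ → Prop), IsPi02 S ∧ Nonempty (X ≃ₜ S)

open Set Topology

/-! ### Locally constant selections on subspaces of Baire space -/

/-- A countable clopen cover has a locally constant index function: take the least index. -/
lemma exists_locallyConstant_index {D : Type*} [TopologicalSpace D] (C : ℕ → Set D)
    (hC : ∀ j, IsClopen (C j)) (hcov : ∀ p, ∃ j, p ∈ C j) :
    ∃ h : D → ℕ, IsLocallyConstant h ∧ ∀ p, p ∈ C (h p) := by
  classical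
  refine ⟨fun p => Nat.find (hcov p), (IsLocallyConstant.iff_exists_open _).2 fun p => ?_,
    fun p => Nat.find_spec (hcov p)⟩
  refine ⟨C (Nat.find (hcov p)) ∩ ⋂ i ∈ {i | i < Nat.find (hcov p)}, (C i)ᶜ, ?_, ?_, ?_⟩
  · exact (hC _).isOpen.inter
      ((Set.finite_lt_nat _).isOpen_biInter fun i _ => (hC i).compl.isOpen)
  · refine ⟨Nat.find_spec (hcov p), ?_⟩
    simp only [mem_iInter]
    exact fun i hi => Nat.find_min (hcov p) hi
  · rintro q ⟨hq, hq'⟩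
    simp only [mem_iInter] at hq'
    exact (Nat.find_eq_iff (hcov q)).2 ⟨hq, fun i hi => hq' i hi⟩

lemma exists_cylinder_of_isOpen {O : Set (ℕ → ℕ)} (hO : IsOpen O) {p : ℕ → ℕ} (hp : p ∈ O) :
    ∃ m, ∀ q : ℕ → ℕ, (∀ i < m, q i = p i) → q ∈ O := by
  obtain ⟨I, u, hu, hsub⟩ := isOpen_pi_iff.1 hO p hp
  refine ⟨I.sup id + 1, fun q hq => hsub fun i hi => ?_⟩
  rw [hq i (Nat.lt_succ_of_le (Finset.le_sup (f := id) hi))]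
  exact (hu i hi).2

/-- A total relation with open sections, from a subspace of Baire space to a countable set, has
a locally constant selection: each open section is a countable union of clopen sets. -/
lemma exists_locallyConstant_selection {D : Set (ℕ → ℕ)} {α : Type*} [Encodable α] [Inhabited α]
    (R : D → α → Prop) (ho : ∀ a, IsOpen {p | R p a}) (hex : ∀ p, ∃ a, R p a) :
    ∃ f : D → α, IsLocallyConstant f ∧ ∀ p, R p (f p) := by
  choose O hO hOR using fun a => isOpen_induced_iff.1 (ho a)
  have hOR' : ∀ a (p : D), p.1 ∈ O a ↔ R p a := fun a p => by
    have := congrArg (p ∈ ·) (hOR a)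
    simpa using this
  let K : α × ℕ → Set D := fun b => {p | ∀ q : ℕ → ℕ, (∀ i : Fin b.2, q i = p.1 i) → q ∈ O b.1}
  have hK : ∀ b, IsClopen (K b) := fun b =>
    (isClopen_discrete {g : Fin b.2 → ℕ | ∀ q : ℕ → ℕ, (∀ i : Fin b.2, q i = g i) → q ∈ O b.1}).preimage
      (f := fun p : D => fun i : Fin b.2 => p.1 i)
      (continuous_pi fun i => (continuous_apply i.1).comp continuous_subtype_val)
  let C : ℕ → Set D := fun j => (Encodable.decode (α := α × ℕ) j).elim ∅ K
  obtain ⟨h, hh, hmem⟩ := exists_locallyConstant_index C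
    (fun j => by
      simp only [C]
      cases Encodable.decode (α := α × ℕ) j with
      | none => exact isClopen_empty
      | some b => exact hK b)
    (fun p => by
      obtain ⟨a, ha⟩ := hex p
      obtain ⟨m, hm⟩ := exists_cylinder_of_isOpen (hO a) ((hOR' a p).2 ha)
      refine ⟨Encodable.encode (a, m), ?_⟩
      simp only [C, Encodable.encodek]
      exact fun q hq => hm q fun i hi => hq ⟨i, hi⟩)
  refine ⟨fun p => (Encodable.decode (α := α × ℕ) (h p)).elim default Prod.fst,
    hh.comp fun j => (Encodable.decode (α := α × ℕ) j).elim default Prod.fst, fun p => ?_⟩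
  have hp := hmem p
  simp only [C] at hp
  cases hd : Encodable.decode (α := α × ℕ) (h p) with
  | none => simp [hd] at hp
  | some b =>
    simp only [hd, Option.elim] at hp ⊢
    exact (hOR' _ p).1 (hp p.1 fun _ => rfl)

/-! ### Basic open sets of `ℕ → Prop` and `Π⁰₂` sets -/

/-- In `ℕ → Prop` every neighbourhood of `y` contains one prescribing finitely many elements
of `y` (and no non-elements). -/
lemma exists_finset_of_isOpen {O : Set (ℕ → Prop)} (hO : IsOpen O) {y : ℕ → Prop} (hy : y ∈ O) :
    ∃ G : Finset ℕ, (∀ n ∈ G, y n) ∧ ∀ z : ℕ → Prop, (∀ n ∈ G, z n) → z ∈ O := by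
  classical
  obtain ⟨I, u, hu, hsub⟩ := isOpen_pi_iff.1 hO y hy
  refine ⟨I.filter y, fun n hn => (Finset.mem_filter.1 hn).2, fun z hz => hsub fun i hi => ?_⟩
  by_cases h : y i
  · have hzi := hz i (Finset.mem_filter.2 ⟨hi, h⟩)
    have : z i = y i := propext ⟨fun _ => h, fun _ => hzi⟩
    rw [this]; exact (hu i hi).2
  · have h1 : u i ∈ 𝓝 (y i) := (hu i hi).1.mem_nhds (hu i hi).2
    have h2 : y i = False := eq_false h
    rw [h2, nhds_false, Filter.mem_top] at h1
    rw [h1]; trivial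

lemma isOpen_apply (n : ℕ) : IsOpen {y : ℕ → Prop | y n} := continuous_Prop.1 (continuous_apply n)

lemma isPi02_imp {Y : Type*} [TopologicalSpace Y] {U V : Set Y} (hU : IsOpen U) (hV : IsOpen V) :
    IsPi02 {y | y ∈ U → y ∈ V} :=
  ⟨fun _ => U, fun _ => V, fun _ => hU, fun _ => hV, (iInter_const _).symm⟩

lemma isPi02_iInter {Y ι : Type*} [TopologicalSpace Y] [Countable ι] {S : ι → Set Y}
    (hS : ∀ i, IsPi02 (S i)) : IsPi02 (⋂ i, S i) := by
  have := Encodable.ofCountable ι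
  choose U V hU hV hUV using hS
  refine ⟨fun k => (Encodable.decode (α := ι × ℕ) k).elim ∅ fun b => U b.1 b.2,
    fun k => (Encodable.decode (α := ι × ℕ) k).elim ∅ fun b => V b.1 b.2, fun k => ?_,
    fun k => ?_, ?_⟩
  · beta_reduce
    cases Encodable.decode (α := ι × ℕ) k with
    | none => exact isOpen_empty
    | some b => exact hU _ _
  · beta_reduce
    cases Encodable.decode (α := ι × ℕ) k with
    | none => exact isOpen_empty
    | some b => exact hV _ _
  · ext y
    simp only [hUV, mem_iInter, mem_ofPred_eq]
    constructor
    · intro h k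
      cases Encodable.decode (α := ι × ℕ) k with
      | none => exact fun h => h
      | some b => exact h _ _
    · intro h i k
      simpa using h (Encodable.encode (i, k))

lemma isPi02_inter {Y : Type*} [TopologicalSpace Y] {S T : Set Y} (hS : IsPi02 S)
    (hT : IsPi02 T) : IsPi02 (S ∩ T) := by
  rw [inter_eq_iInter]
  exact isPi02_iInter fun b => by cases b <;> assumption

/-! ### Quasi-Polish spaces have continuous overt choice -/

lemma IsCountableBasis.exists_mem_subset {X : Type*} [TopologicalSpace X] {B : ℕ → Set X}
    (hB : IsCountableBasis B) {U : Set X} (hU : IsOpen U) {x : X} (hx : x ∈ U) :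
    ∃ n, x ∈ B n ∧ B n ⊆ U := by
  obtain ⟨S, rfl⟩ := hB.2 U hU
  simp only [mem_iUnion] at hx
  obtain ⟨n, hn, hx⟩ := hx
  exact ⟨n, hx, subset_biUnion_of_mem hn⟩

/-- The set of names of nonempty closed sets. -/
def names {X : Type*} [TopologicalSpace X] (B : ℕ → Set X) : Set (ℕ → ℕ) :=
  {p | ∃ A : Set X, A.Nonempty ∧ IsClosed A ∧ ClosedName B A p}

lemma ClosedName.iff {X : Type*} {B : ℕ → Set X} {A : Set X} {p : ℕ → ℕ}
    (h : ClosedName B A p) (n : ℕ) : (B n ∩ A).Nonempty ↔ ∃ k, p k = n + 1 := by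
  have := congrArg (n ∈ ·) h
  simpa using this

lemma PointName.iff {X : Type*} {B : ℕ → Set X} {x : X} {p : ℕ → ℕ}
    (h : PointName B x p) (n : ℕ) : x ∈ B n ↔ ∃ k, p k = n + 1 := by
  have := congrArg (n ∈ ·) h
  simpa using this

/-- Following a name of `A`, one builds locally constantly an increasing sequence of finite sets
`c s` whose basic open sets all meet `A`, meeting at stage `s` the requirement
`U i → V i` with `i` the first component of `s`; the union of the `c s` lies in the `Π⁰₂` set
and is a limit of points of `A`. -/
lemma overtChoice_of_quasiPolish {X : Type*} [TopologicalSpace X] (B : ℕ → Set X)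
    (hB : IsCountableBasis B) (h : QuasiPolish X) : OvertChoiceContinuous B := by
  classical
  obtain ⟨S, ⟨U, V, hU, hV, hS⟩, ⟨φ⟩⟩ := h
  let W : Finset ℕ → Set X := fun G => {x | ∀ n ∈ G, (φ x).1 n}
  let cyl : Finset ℕ → Set (ℕ → Prop) := fun G => {z | ∀ n ∈ G, z n}
  have hcyl : ∀ G, IsOpen (cyl G) := fun G => by
    have : cyl G = ⋂ n ∈ G, {y | y n} := by ext; simp [cyl]
    rw [this]; exact isOpen_biInter_finset fun n _ => isOpen_apply n
  have hW : ∀ G, IsOpen (W G) := fun G =>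
    (hcyl G).preimage (continuous_subtype_val.comp φ.continuous)
  have hWnhds : ∀ (O : Set X) (x : X), IsOpen O → x ∈ O → ∃ G, x ∈ W G ∧ W G ⊆ O := by
    intro O x hO hx
    obtain ⟨O', hO', hOO'⟩ := isOpen_induced_iff.1 (φ.symm.continuous.isOpen_preimage O hO)
    have key : ∀ z, (φ z).1 ∈ O' ↔ z ∈ O := fun z => by
      have := congrArg (φ z ∈ ·) hOO'
      simpa using this
    obtain ⟨G, hG, hG'⟩ := exists_finset_of_isOpen hO' ((key x).2 hx)
    exact ⟨G, hG, fun z hz => (key z).1 (hG' _ hz)⟩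
  -- `meets p G` is the open condition on the name `p` of `A` saying that `W G` meets `A`.
  let meets : (ℕ → ℕ) → Finset ℕ → Prop := fun p G => ∃ k n, p k = n + 1 ∧ B n ⊆ W G
  have hmeets : ∀ {p A}, ClosedName B A p → ∀ G, meets p G ↔ (W G ∩ A).Nonempty := by
    intro p A hA G
    constructor
    · rintro ⟨k, n, hk, hn⟩
      exact ((hA.iff n).2 ⟨k, hk⟩).mono (inter_subset_inter_left _ hn)
    · rintro ⟨x, hx, hxA⟩
      obtain ⟨n, hn, hn'⟩ := hB.exists_mem_subset (hW G) hx
      obtain ⟨k, hk⟩ := (hA.iff n).1 ⟨x, hn, hxA⟩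
      exact ⟨k, n, hk, hn'⟩
  have hmeetsO : ∀ G, IsOpen {p : names B | meets p.1 G} := by
    intro G
    simp only [meets, ofPred_exists]
    refine isOpen_iUnion fun k => isOpen_iUnion fun n => ?_
    have hc : Continuous fun p : names B => p.1 k :=
      (continuous_apply k).comp continuous_subtype_val
    exact ((isOpen_discrete {n + 1}).preimage hc).and isOpen_const
  let St := {c : names B → Finset ℕ // IsLocallyConstant c ∧ ∀ p, meets p.1 (c p)}
  have hstep : ∀ (s : ℕ) (c : St), ∃ c' : St, ∀ p, c.1 p ⊆ c'.1 p ∧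
      (cyl (c.1 p) ⊆ U s.unpair.1 → cyl (c'.1 p) ⊆ V s.unpair.1) := by
    rintro s ⟨c, hc, hcm⟩
    obtain ⟨f, hf, hfR⟩ := exists_locallyConstant_selection
      (fun (p : names B) (G : Finset ℕ) => (c p ⊆ G ∧
        (cyl (c p) ⊆ U s.unpair.1 → cyl G ⊆ V s.unpair.1)) ∧ meets p.1 G)
      (fun G => (hc {H | H ⊆ G ∧ (cyl H ⊆ U s.unpair.1 → cyl G ⊆ V s.unpair.1)}).inter
        (hmeetsO G))
      (fun p => by
        by_cases hcU : cyl (c p) ⊆ U s.unpair.1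
        · obtain ⟨A, -, -, hA⟩ := p.2
          obtain ⟨x, hx, hxA⟩ := (hmeets hA _).1 (hcm p)
          have hxS : (φ x).1 ∈ S := (φ x).2
          have hxS := mem_iInter.1 (hS.subset hxS)
          obtain ⟨G, hG, hG'⟩ := exists_finset_of_isOpen (hV _) (hxS _ (hcU hx))
          refine ⟨c p ∪ G, ⟨Finset.subset_union_left, fun _ z hz => hG' _ fun n hn =>
            hz n (Finset.mem_union_right _ hn)⟩, (hmeets hA _).2 ⟨x, fun n hn => ?_, hxA⟩⟩
          exact (Finset.mem_union.1 hn).elim (hx n) (hG n)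
        · exact ⟨c p, ⟨Finset.Subset.refl _, fun h => absurd h hcU⟩, hcm p⟩)
    exact ⟨⟨f, hf, fun p => (hfR p).2⟩, fun p => (hfR p).1⟩
  choose step hstep using hstep
  let c0 : St := ⟨fun _ => ∅, IsLocallyConstant.const _, fun p => by
    obtain ⟨A, hne, -, hA⟩ := p.2
    exact (hmeets hA _).2 (by simpa [W] using hne)⟩
  let c : ℕ → St := fun s => Nat.rec c0 step s
  have hcs : ∀ s, c (s + 1) = step s (c s) := fun s => rfl
  have hmono : ∀ p, Monotone fun s => (c s).1 p := fun p =>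
    monotone_nat_of_le_succ fun s => by rw [hcs]; exact (hstep s (c s) p).1
  let out : ℕ → Finset ℕ → ℕ := fun s G =>
    if W G ⊆ B s.unpair.1 then s.unpair.1 + 1 else 0
  refine ⟨fun p s => if hp : p ∈ names B then out s ((c s).1 ⟨p, hp⟩) else 0, ?_, ?_⟩
  · change ContinuousOn _ (names B)
    rw [continuousOn_iff_continuous_domRestrict, continuous_pi_iff]
    intro s
    have : (fun p : names B => (names B).domRestrict (fun p s =>
        if hp : p ∈ names B then out s ((c s).1 ⟨p, hp⟩) else 0) p s) =
        out s ∘ (c s).1 := by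
      ext p; simp [domRestrict]
    rw [this]
    exact ((c s).2.1.comp (out s)).continuous
  · intro p A hne hcl hA
    have hp : p ∈ names B := ⟨A, hne, hcl, hA⟩
    let y : ℕ → Prop := fun n => ∃ s, n ∈ (c s).1 ⟨p, hp⟩
    have hfin : ∀ G : Finset ℕ, (∀ n ∈ G, y n) → ∃ s, ∀ t ≥ s, G ⊆ (c t).1 ⟨p, hp⟩ := by
      intro G hG
      choose! g hg using hG
      exact ⟨G.sup g, fun t ht n hn => hmono _ ((Finset.le_sup hn).trans ht) (hg n hn)⟩
    have hyS : y ∈ S := by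
      rw [hS, mem_iInter]
      intro i hi
      obtain ⟨G, hG, hG'⟩ := exists_finset_of_isOpen (hU i) hi
      obtain ⟨s, hs⟩ := hfin G hG
      have hs' := hs (Nat.pair i s) (Nat.right_le_pair i s)
      have := (hstep (Nat.pair i s) (c (Nat.pair i s)) ⟨p, hp⟩).2
      rw [← hcs, Nat.unpair_pair] at this
      exact this (fun z hz => hG' z fun n hn => hz n (hs' hn)) fun n hn =>
        ⟨Nat.pair i s + 1, hn⟩
    obtain ⟨x, hx⟩ := φ.surjective ⟨y, hyS⟩
    have hxW : ∀ G, x ∈ W G ↔ ∀ n ∈ G, y n := fun G => by simp [W, hx]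
    refine ⟨x, ?_, ?_⟩
    · by_contra hxA
      obtain ⟨G, hG, hG'⟩ := hWnhds _ x hcl.isOpen_compl hxA
      obtain ⟨s, hs⟩ := hfin G ((hxW G).1 hG)
      obtain ⟨z, hz, hzA⟩ := (hmeets hA _).1 ((c s).2.2 ⟨p, hp⟩)
      exact hG' (fun n hn => hz n (hs s le_rfl hn)) hzA
    · ext n
      simp only [mem_ofPred_eq, hp, dif_pos, out]
      constructor
      · intro hn
        obtain ⟨G, hG, hG'⟩ := hWnhds _ x (hB.1 n) hn
        obtain ⟨s, hs⟩ := hfin G ((hxW G).1 hG)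
        refine ⟨Nat.pair n s, ?_⟩
        rw [if_pos] <;> rw [Nat.unpair_pair]
        exact fun z hz => hG' fun n hn => hz n (hs _ (Nat.right_le_pair _ _) hn)
      · rintro ⟨s, hs⟩
        split_ifs at hs with h
        obtain rfl : s.unpair.1 = n := by omega
        exact h ((hxW _).2 fun n hn => ⟨s, hn⟩)

/-! ### Continuous overt choice makes a `T1` space quasi-Polish -/

/-- The sequence `p` has the finite sequence `τ` as an initial segment. -/
def Prolongs (p : ℕ → ℕ) (τ : List ℕ) : Prop := ∀ (k : ℕ) (h : k < τ.length), p k = τ[k]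

/-- Reading the initial segment `τ` of a name in `D` forces `F` to list `n`. -/
def Commits (D : Set (ℕ → ℕ)) (F : (ℕ → ℕ) → (ℕ → ℕ)) (τ : List ℕ) (n : ℕ) : Prop :=
  ∀ p ∈ D, Prolongs p τ → ∃ k, F p k = n + 1

lemma Prolongs.of_prefix {p : ℕ → ℕ} {τ τ' : List ℕ} (h : Prolongs p τ') (hτ : τ <+: τ') :
    Prolongs p τ := fun k hk => by
  rw [h k (hk.trans_le hτ.length_le), hτ.getElem hk]

lemma Commits.of_prefix {D : Set (ℕ → ℕ)} {F : (ℕ → ℕ) → (ℕ → ℕ)} {τ τ' : List ℕ} {n : ℕ}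
    (h : Commits D F τ n) (hτ : τ <+: τ') : Commits D F τ' n :=
  fun p hp hp' => h p hp (hp'.of_prefix hτ)

lemma exists_prolongs_enumerating (τ : List ℕ) (E : ℕ → Prop) (hτ : ∀ n, n + 1 ∈ τ → E n) :
    ∃ p, Prolongs p τ ∧ ∀ n, (∃ k, p k = n + 1) ↔ E n := by
  classical
  refine ⟨fun k => if h : k < τ.length then τ[k] else
    if E (k - τ.length) then k - τ.length + 1 else 0, fun k hk => by simp [hk], fun n => ⟨?_, ?_⟩⟩
  · rintro ⟨k, hk⟩
    dsimp only at hk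
    split_ifs at hk with h1 h2
    · exact hτ n (hk ▸ List.getElem_mem h1)
    · obtain rfl : k - τ.length = n := by omega
      exact h2
  · intro hn
    refine ⟨n + τ.length, ?_⟩
    simp [hn]

lemma exists_commits {D : Set (ℕ → ℕ)} {F : (ℕ → ℕ) → (ℕ → ℕ)} (hF : ContinuousOn F D)
    {p : ℕ → ℕ} (hp : p ∈ D) {k n : ℕ} (hk : F p k = n + 1) :
    ∃ m, ∀ τ : List ℕ, Prolongs p τ → m ≤ τ.length → Commits D F τ n := by
  have h1 : {g : ℕ → ℕ | g k = n + 1} ∈ 𝓝 (F p) :=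
    ((isOpen_discrete {n + 1}).preimage
      (continuous_apply (A := fun _ : ℕ => ℕ) k)).mem_nhds hk
  obtain ⟨O, hO, hpO, hsub⟩ := mem_nhdsWithin.1 (hF p hp h1)
  obtain ⟨m, hm⟩ := exists_cylinder_of_isOpen hO hpO
  refine ⟨m, fun τ hτ hlen r hr hrτ => ⟨k, hsub ⟨hm r fun i hi => ?_, hr⟩⟩⟩
  rw [hrτ i (hi.trans_le hlen), hτ i (hi.trans_le hlen)]

/-- The canonical embedding of a countably based space into `ℕ → Prop`. -/
def code {X : Type*} (B : ℕ → Set X) (x : X) : ℕ → Prop := fun n => x ∈ B n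

lemma isEmbedding_code {X : Type*} [TopologicalSpace X] [T0Space X] {B : ℕ → Set X}
    (hB : IsCountableBasis B) : IsEmbedding (code B) := by
  have hind : IsInducing (code B) := by
    refine ⟨le_antisymm ?_ ?_⟩
    · exact continuous_iff_le_induced.1
        (continuous_pi fun n => continuous_Prop.2 (hB.1 n))
    · intro U hU
      obtain ⟨S, rfl⟩ := hB.2 U hU
      exact isOpen_induced_iff.2 ⟨⋃ n ∈ S, {y | y n},
        isOpen_biUnion fun n _ => isOpen_apply n, by ext; simp [code]⟩
  exact hind.isEmbedding

lemma exists_denseSeq {X : Type*} [Nonempty X] (B : ℕ → Set X) :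
    ∃ q : ℕ → X, ∀ G : Finset ℕ, (∃ x, ∀ n ∈ G, x ∈ B n) → ∃ i, ∀ n ∈ G, q i ∈ B n := by
  have : ∀ G : Finset ℕ, ∃ z : X, (∃ x, ∀ n ∈ G, x ∈ B n) → ∀ n ∈ G, z ∈ B n := fun G => by
    by_cases h : ∃ x, ∀ n ∈ G, x ∈ B n
    · exact ⟨h.choose, fun _ => h.choose_spec⟩
    · exact ⟨Classical.arbitrary X, fun h' => absurd h' h⟩
  choose f hf using this
  refine ⟨fun i => f ((Encodable.decode i).getD ∅), fun G hG => ⟨Encodable.encode G, ?_⟩⟩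
  simpa using hf G hG

/-- The elements of `τ` lie in `y` or in the code of one of the points `q i`, `i ∈ P`. -/
def Compat {X : Type*} (B : ℕ → Set X) (q : ℕ → X) (τ : List ℕ) (P : Finset ℕ)
    (y : ℕ → Prop) : Prop :=
  ∀ n, n + 1 ∈ τ → (∃ i ∈ P, q i ∈ B n) ∨ y n

/-- Having read `τ`, the choice function can no longer output any of the points `q i`,
`i ∈ P`. -/
def Excludes {X : Type*} [TopologicalSpace X] (B : ℕ → Set X) (F : (ℕ → ℕ) → (ℕ → ℕ))
    (q : ℕ → X) (τ : List ℕ) (P : Finset ℕ) : Prop :=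
  ∀ i ∈ P, ∃ n, Commits (names B) F τ n ∧ q i ∉ B n

lemma isOpen_compat {X : Type*} (B : ℕ → Set X) (q : ℕ → X) (τ : List ℕ) (P : Finset ℕ) :
    IsOpen {y | Compat B q τ P y} := by
  have : {y | Compat B q τ P y} =
      ⋂ a ∈ τ.toFinset, {y | ∀ n, a = n + 1 → (∃ i ∈ P, q i ∈ B n) ∨ y n} := by
    ext y
    simp only [Compat, mem_ofPred_eq, mem_iInter, List.mem_toFinset]
    exact ⟨fun h a ha n hn => h n (hn ▸ ha), fun h n hn => h _ hn n rfl⟩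
  rw [this]
  refine isOpen_biInter_finset fun a _ => ?_
  cases a with
  | zero => simp
  | succ a =>
    have : {y : ℕ → Prop | ∀ n, a + 1 = n + 1 → (∃ i ∈ P, q i ∈ B n) ∨ y n} =
        {y | (∃ i ∈ P, q i ∈ B a) ∨ y a} := by ext; simp
    rw [this]
    exact isOpen_const.union (isOpen_apply a)

/-- The defining conditions of the `Π⁰₂` set that turns out to be the image of `X`. -/
structure Admissible {X : Type*} [TopologicalSpace X] (B : ℕ → Set X)
    (F : (ℕ → ℕ) → (ℕ → ℕ)) (q : ℕ → X) (y : ℕ → Prop) : Prop where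
  /-- Finitely many basic open sets listed in `y` have a common point. -/
  inhabited : ∀ G : Finset ℕ, (∀ n ∈ G, y n) → ∃ x, ∀ n ∈ G, x ∈ B n
  /-- `y` is not strictly contained in the code of any `q i`. -/
  not_lt : ∀ i n, q i ∈ B n → y n ∨ ∃ m, y m ∧ q i ∉ B m
  /-- Once the points in `P` are excluded, `F` can be made to list any element of `y`. -/
  extend : ∀ τ P n, Excludes B F q τ P → Compat B q τ P y → y n →
    ∃ τ', τ <+: τ' ∧ Compat B q τ' P y ∧ Commits (names B) F τ' n
  /-- Once the points in `P` are excluded, `F` lists only elements of `y`. -/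
  sound : ∀ τ P n, Excludes B F q τ P → Compat B q τ P y → Commits (names B) F τ n → y n

lemma isPi02_admissible {X : Type*} [TopologicalSpace X] (B : ℕ → Set X)
    (F : (ℕ → ℕ) → (ℕ → ℕ)) (q : ℕ → X) : IsPi02 {y | Admissible B F q y} := by
  have ha : IsPi02 (⋂ G : Finset ℕ, {y : ℕ → Prop |
      y ∈ {y : ℕ → Prop | (∀ n ∈ G, y n) ∧ ¬ ∃ x, ∀ n ∈ G, x ∈ B n} →
        y ∈ (∅ : Set (ℕ → Prop))}) := by
    refine isPi02_iInter fun G => isPi02_imp ?_ isOpen_empty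
    refine IsOpen.and ?_ isOpen_const
    have : {y : ℕ → Prop | ∀ n ∈ G, y n} = ⋂ n ∈ G, {y | y n} := by ext; simp
    rw [this]; exact isOpen_biInter_finset fun n _ => isOpen_apply n
  have he : IsPi02 (⋂ b : ℕ × ℕ, {y : ℕ → Prop | y ∈ {_y : ℕ → Prop | q b.1 ∈ B b.2} →
      y ∈ {y : ℕ → Prop | y b.2 ∨ ∃ m, y m ∧ q b.1 ∉ B m}}) := by
    refine isPi02_iInter fun b => isPi02_imp isOpen_const ((isOpen_apply _).union ?_)
    change IsOpen {y : ℕ → Prop | ∃ m, y m ∧ q b.1 ∉ B m}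
    simp only [ofPred_exists]
    exact isOpen_iUnion fun m => (isOpen_apply m).and isOpen_const
  have hb : IsPi02 (⋂ b : List ℕ × Finset ℕ × ℕ, {y : ℕ → Prop |
      y ∈ {y : ℕ → Prop | (Excludes B F q b.1 b.2.1 ∧ Compat B q b.1 b.2.1 y) ∧ y b.2.2} →
      y ∈ {y : ℕ → Prop | ∃ τ', b.1 <+: τ' ∧ Compat B q τ' b.2.1 y ∧
        Commits (names B) F τ' b.2.2}}) := by
    refine isPi02_iInter fun b => isPi02_imp
      ((isOpen_const.and (isOpen_compat B q _ _)).and (isOpen_apply _)) ?_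
    simp only [ofPred_exists]
    exact isOpen_iUnion fun τ' => isOpen_const.and ((isOpen_compat B q _ _).and isOpen_const)
  have hc : IsPi02 (⋂ b : List ℕ × Finset ℕ × ℕ, {y : ℕ → Prop |
      y ∈ {y : ℕ → Prop | Excludes B F q b.1 b.2.1 ∧ Compat B q b.1 b.2.1 y ∧
        Commits (names B) F b.1 b.2.2} → y ∈ {y : ℕ → Prop | y b.2.2}}) :=
    isPi02_iInter fun b => isPi02_imp
      (isOpen_const.and ((isOpen_compat B q _ _).and isOpen_const)) (isOpen_apply _)
  convert isPi02_inter (isPi02_inter ha he) (isPi02_inter hb hc) using 1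
  ext y
  simp only [mem_inter_iff, mem_iInter, mem_ofPred_eq, mem_empty_iff_false]
  constructor
  · intro h
    exact ⟨⟨fun G hG => hG.2 (h.inhabited G hG.1), fun b => h.not_lt _ _⟩,
      fun b hb => h.extend _ _ _ hb.1.1 hb.1.2 hb.2,
      fun b hb => h.sound _ _ _ hb.1 hb.2.1 hb.2.2⟩
  · rintro ⟨⟨h1, h2⟩, h3, h4⟩
    exact ⟨fun G hG => by_contra fun h => h1 G ⟨hG, h⟩, fun i n => h2 (i, n),
      fun τ P n h h' hn => h3 (τ, P, n) ⟨⟨h, h'⟩, hn⟩,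
      fun τ P n h h' hn => h4 (τ, P, n) ⟨h, h', hn⟩⟩

section

variable {X : Type*} [TopologicalSpace X] {B : ℕ → Set X} {F : (ℕ → ℕ) → (ℕ → ℕ)}

/-- A choice function returns `x` on a suitable name of the finite closed set consisting of `x`
and of the already excluded points. -/
lemma exists_name_of_compat [T1Space X]
    (hF : ∀ (p : ℕ → ℕ) (A : Set X), A.Nonempty → IsClosed A → ClosedName B A p →
      ∃ x ∈ A, PointName B x (F p)) {q : ℕ → X} {x : X} {τ : List ℕ} {P : Finset ℕ}
    (hex : Excludes B F q τ P) (hco : Compat B q τ P (code B x)) :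
    ∃ p ∈ names B, Prolongs p τ ∧
      (∀ n, (∃ k, p k = n + 1) ↔ (∃ i ∈ P, q i ∈ B n) ∨ x ∈ B n) ∧ PointName B x (F p) := by
  obtain ⟨p, hp, hpE⟩ := exists_prolongs_enumerating τ _ hco
  have hcl : IsClosed (insert x (q '' P)) := ((P.finite_toSet.image q).insert x).isClosed
  have hname : ClosedName B (insert x (q '' P)) p := by
    ext n
    rw [mem_ofPred_eq, mem_ofPred_eq, hpE]
    constructor
    · rintro ⟨z, hz, rfl | ⟨i, hi, rfl⟩⟩
      · exact Or.inr hz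
      · exact Or.inl ⟨i, hi, hz⟩
    · rintro (⟨i, hi, hz⟩ | hz)
      · exact ⟨q i, hz, Or.inr ⟨i, hi, rfl⟩⟩
      · exact ⟨x, hz, Or.inl rfl⟩
  have hpD : p ∈ names B := ⟨_, insert_nonempty _ _, hcl, hname⟩
  refine ⟨p, hpD, hp, hpE, ?_⟩
  obtain ⟨z, rfl | ⟨i, hi, rfl⟩, hz⟩ := hF p _ (insert_nonempty _ _) hcl hname
  · exact hz
  · obtain ⟨n, hn, hn'⟩ := hex i hi
    exact absurd ((hz.iff n).2 (hn p hpD hp)) hn'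

lemma admissible_code [T1Space X] (hB : IsCountableBasis B) (hFc : ContinuousOn F (names B))
    (hF : ∀ (p : ℕ → ℕ) (A : Set X), A.Nonempty → IsClosed A → ClosedName B A p →
      ∃ x ∈ A, PointName B x (F p)) (q : ℕ → X) (x : X) : Admissible B F q (code B x) where
  inhabited G hG := ⟨x, hG⟩
  not_lt i n hn := by
    by_cases h : x = q i
    · exact Or.inl (h ▸ hn)
    · obtain ⟨m, hm, hm'⟩ := hB.exists_mem_subset (isOpen_compl_singleton (x := q i))
        (x := x) h
      exact Or.inr ⟨m, hm, fun h' => hm' h' rfl⟩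
  extend τ P n hex hco hn := by
    obtain ⟨p, hpD, hp, hpE, hpx⟩ := exists_name_of_compat hF hex hco
    obtain ⟨k, hk⟩ := (hpx.iff n).1 hn
    obtain ⟨m, hm⟩ := exists_commits hFc hpD hk
    refine ⟨(List.range (max m τ.length)).map p, ?_, ?_, hm _ (fun k hk => by simp) (by simp)⟩
    · rw [List.prefix_iff_getElem]
      exact ⟨by simp, fun k hk => by simp [hp k hk]⟩
    · intro n hn
      obtain ⟨k, -, hk⟩ := List.mem_map.1 hn
      exact (hpE n).1 ⟨k, hk⟩
  sound τ P n hex hco hn := by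
    obtain ⟨p, hpD, hp, -, hpx⟩ := exists_name_of_compat hF hex hco
    exact (hpx.iff n).2 (hn p hpD hp)

/-- If the admissible `y` is not the code of any `q i`, then one builds a name `p` of the closure
of a set of points `q i` on which `F` lists exactly the elements of `y`. -/
lemma exists_code_eq_of_admissible (hFc : ContinuousOn F (names B))
    (hF : ∀ (p : ℕ → ℕ) (A : Set X), A.Nonempty → IsClosed A → ClosedName B A p →
      ∃ x ∈ A, PointName B x (F p)) {q : ℕ → X}
    (hB : IsCountableBasis B)
    (hq : ∀ G : Finset ℕ, (∃ x, ∀ n ∈ G, x ∈ B n) → ∃ i, ∀ n ∈ G, q i ∈ B n)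
    {y : ℕ → Prop} (hy : Admissible B F q y) : ∃ x, code B x = y := by
  classical
  by_cases hyq : ∃ i, code B (q i) = y
  · exact ⟨_, hyq.choose_spec⟩
  have hne : ∀ i, ∃ m, y m ∧ q i ∉ B m := by
    intro i
    by_contra! h
    refine hyq ⟨i, funext fun n => propext ⟨fun hn => ?_, h n⟩⟩
    exact (hy.not_lt i n hn).resolve_right fun ⟨m, hm, hm'⟩ => hm' (h m hm)
  let St := {c : List ℕ × Finset ℕ // Excludes B F q c.1 c.2 ∧ Compat B q c.1 c.2 y}
  have hstep : ∀ (k : ℕ) (c : St), ∃ c' : St, c.1.1 <+: c'.1.1 ∧ c.1.2 ⊆ c'.1.2 ∧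
      c.1.1.length < c'.1.1.length ∧ c'.1.2.Nonempty ∧
      (∀ n, n + 1 ∈ c.1.1 → ∃ i ∈ c'.1.2, q i ∈ B n) ∧
      (∀ n < k, (∃ i ∈ c.1.2, q i ∈ B n) → n + 1 ∈ c'.1.1) ∧
      (y k → Commits (names B) F c'.1.1 k) := by
    rintro k ⟨⟨τ, P⟩, hex, hco⟩
    dsimp only at hex hco
    obtain ⟨τ₁, hτ₁, hco₁, hk⟩ : ∃ τ₁, τ <+: τ₁ ∧ Compat B q τ₁ P y ∧
        (y k → Commits (names B) F τ₁ k) := by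
      by_cases hyk : y k
      · obtain ⟨τ₁, h1, h2, h3⟩ := hy.extend τ P k hex hco hyk
        exact ⟨τ₁, h1, h2, fun _ => h3⟩
      · exact ⟨τ, List.prefix_rfl, hco, fun h => absurd h hyk⟩
    have hex₁ : Excludes B F q τ₁ P := fun j hj => by
      obtain ⟨n, hn, hn'⟩ := hex j hj
      exact ⟨n, hn.of_prefix hτ₁, hn'⟩
    -- The new point `q i` meets every basic open set promised by `τ` and not yet witnessed by `P`.
    obtain ⟨i, hi⟩ := hq ((τ.toFinset.image Nat.pred).filter
        fun n => n + 1 ∈ τ ∧ ¬ ∃ j ∈ P, q j ∈ B n) <| hy.inhabited _ fun n hn => by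
      have := (Finset.mem_filter.1 hn).2
      exact (hco n this.1).resolve_left this.2
    obtain ⟨m, hm, hm'⟩ := hne i
    obtain ⟨τ₂, hτ₂, hco₂, hcm⟩ := hy.extend τ₁ P m hex₁ hco₁ hm
    let l : List ℕ := (List.range k).map (fun n => if ∃ j ∈ P, q j ∈ B n then n + 1 else 0) ++ [0]
    have hpre : τ₂ <+: τ₂ ++ l := List.prefix_append _ _
    refine ⟨⟨(τ₂ ++ l, insert i P), ?_, ?_⟩, ?_, ?_, ?_, ?_, ?_, ?_, ?_⟩
    · intro j hj
      rcases Finset.mem_insert.1 hj with rfl | hj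
      · exact ⟨m, hcm.of_prefix hpre, hm'⟩
      · obtain ⟨n, hn, hn'⟩ := hex₁ j hj
        exact ⟨n, hn.of_prefix (hτ₂.trans hpre), hn'⟩
    · intro n hn
      have hins : (∃ j ∈ P, q j ∈ B n) → ∃ j ∈ insert i P, q j ∈ B n :=
        fun ⟨j, hj, hj'⟩ => ⟨j, Finset.mem_insert_of_mem hj, hj'⟩
      rcases List.mem_append.1 hn with hn | hn
      · exact (hco₂ n hn).imp_left hins
      · left
        apply hins
        simp only [l, List.mem_append, List.mem_map, List.mem_singleton] at hn
        rcases hn with ⟨a, -, ha⟩ | hn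
        · split_ifs at ha with h
          obtain rfl : a = n := by omega
          exact h
        · omega
    · exact hτ₁.trans (hτ₂.trans hpre)
    · exact Finset.subset_insert _ _
    · have := (hτ₁.trans hτ₂).length_le
      simp only [List.length_append, l, List.length_singleton]
      omega
    · exact Finset.insert_nonempty _ _
    · intro n hn
      by_cases h : ∃ j ∈ P, q j ∈ B n
      · obtain ⟨j, hj, hj'⟩ := h
        exact ⟨j, Finset.mem_insert_of_mem hj, hj'⟩
      · refine ⟨i, Finset.mem_insert_self _ _, hi n (Finset.mem_filter.2 ⟨?_, hn, h⟩)⟩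
        exact Finset.mem_image.2 ⟨n + 1, List.mem_toFinset.2 hn, rfl⟩
    · intro n hn h
      refine List.mem_append_right _ (List.mem_append_left _ (List.mem_map.2 ⟨n, ?_, ?_⟩))
      · exact List.mem_range.2 hn
      · exact if_pos h
    · exact fun h => (hk h).of_prefix (hτ₂.trans hpre)
  choose step hs1 hs2 hs3 hs4 hs5 hs6 hs7 using hstep
  let c : ℕ → St := fun k => Nat.rec ⟨([], ∅), by simp [Excludes], by simp [Compat]⟩ step k
  have hpre : ∀ {j k}, j ≤ k → (c j).1.1 <+: (c k).1.1 := by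
    intro j k h
    induction h with
    | refl => exact List.prefix_rfl
    | step _ ih => exact ih.trans (hs1 _ _)
  have hPmono : Monotone fun k => (c k).1.2 := monotone_nat_of_le_succ fun k => hs2 k (c k)
  have hlen : ∀ k, k ≤ (c k).1.1.length := by
    intro k
    induction k with
    | zero => exact Nat.zero_le _
    | succ k ih => exact Nat.succ_le_of_lt (ih.trans_lt (hs3 k (c k)))
  let p : ℕ → ℕ := fun j => (c (j + 1)).1.1[j]'(hlen (j + 1))
  have hp : ∀ k, Prolongs p (c k).1.1 := by
    intro k j hj
    rcases le_total k (j + 1) with h | h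
    · exact ((hpre h).getElem hj).symm
    · exact (hpre h).getElem (hlen (j + 1))
  let A : Set X := closure {x | ∃ k, ∃ i ∈ (c k).1.2, q i = x}
  have hA : A.Nonempty := by
    obtain ⟨i, hi⟩ := hs4 0 (c 0)
    exact ⟨q i, subset_closure ⟨1, i, hi, rfl⟩⟩
  have hname : ClosedName B A p := by
    ext n
    simp only [mem_ofPred_eq]
    constructor
    · rintro ⟨z, hz, hzA⟩
      obtain ⟨_, hx, k, i, hi, rfl⟩ := mem_closure_iff.1 hzA _ (hB.1 n) hz
      have h1 := hs6 (max k (n + 1)) (c (max k (n + 1))) n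
        (lt_of_lt_of_le n.lt_succ_self (le_max_right _ _))
        ⟨i, hPmono (le_max_left k (n + 1)) hi, hx⟩
      obtain ⟨j, hj, hj'⟩ := List.getElem_of_mem h1
      exact ⟨j, (hp (max k (n + 1) + 1) j hj).trans hj'⟩
    · rintro ⟨k, hk⟩
      obtain ⟨i, hi, hi'⟩ := hs5 (k + 1) (c (k + 1)) n (hk ▸ List.getElem_mem _)
      exact ⟨q i, hi', subset_closure ⟨k + 2, i, hi, rfl⟩⟩
  have hpD : p ∈ names B := ⟨A, hA, isClosed_closure, hname⟩
  obtain ⟨x, -, hx⟩ := hF p A hA isClosed_closure hname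
  refine ⟨x, funext fun n => propext ⟨fun hn => ?_, fun hn => ?_⟩⟩
  · obtain ⟨k, hk⟩ := (hx.iff n).1 hn
    obtain ⟨m, hm⟩ := exists_commits hFc hpD hk
    exact hy.sound _ _ n (c m).2.1 (c m).2.2 (hm _ (hp m) (hlen m))
  · exact (hx.iff n).2 (hs7 n (c n) hn p hpD (hp (n + 1)))

end

lemma quasiPolish_of_overtChoice {X : Type*} [TopologicalSpace X] [T1Space X] (B : ℕ → Set X)
    (hB : IsCountableBasis B) (h : OvertChoiceContinuous B) : QuasiPolish X := by
  rcases isEmpty_or_nonempty X with hX | hX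
  · exact ⟨∅, ⟨fun _ => univ, fun _ => ∅, fun _ => isOpen_univ, fun _ => isOpen_empty,
      by ext; simp⟩, ⟨Homeomorph.empty⟩⟩
  obtain ⟨F, hFc, hF⟩ := h
  obtain ⟨q, hq⟩ := exists_denseSeq B
  refine ⟨range (code B), ?_, ⟨(isEmbedding_code hB).toHomeomorph⟩⟩
  convert isPi02_admissible B F q
  ext y
  constructor
  · rintro ⟨x, rfl⟩
    exact admissible_code hB hFc hF q x
  · exact fun hy => exists_code_eq_of_admissible hFc hF hB hq hy

/-- A countably-based `T1` space is quasi-Polish iff overt choice for it is continuous. -/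
theorem quasiPolish_iff_overtChoiceContinuous {X : Type*} [TopologicalSpace X] [T1Space X]
    (B : ℕ → Set X) (hB : IsCountableBasis B) :
    QuasiPolish X ↔ OvertChoiceContinuous B := by
  exact ⟨overtChoice_of_quasiPolish B hB, quasiPolish_of_overtChoice B hB⟩
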